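/- arXiv:1105.4983 — 3 statements merged into one kernel-verified Lean document; each statement's English description precedes it below -/
import Mathlib

section
/- For every M ∈ G_Δ, the matrix E(M) = D·M·D⁻¹ has all entries in ℤ, the map E is multiplicative (E(M·N) = E(M)·E(N) for M, N ∈ G_Δ), and the reduction of E(M) modulo 2 is an invertible matrix over ℤ/2ℤ (its inverse being the reduction of E(M⁻¹)). -/
open Matrix

/-- The standard symplectic matrix `J = [[0, I₂], [−I₂, 0]]` over `ℚ`. -/
def Jmat : Matrix (Fin 4) (Fin 4) ℚ :=
  !![0, 0, 1, 0; 0, 0, 0, 1; -1, 0, 0, 0; 0, -1, 0, 0]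

/-- A rational number is an integer. -/
def IsIntEntry (q : ℚ) : Prop := ∃ n : ℤ, q = n

/-- A rational number is an even integer (lies in `2ℤ`). -/
def IsEvenEntry (q : ℚ) : Prop := ∃ n : ℤ, q = 2 * n

/-- A rational number is a half-integer (`2·q ∈ ℤ`). -/
def IsHalfIntEntry (q : ℚ) : Prop := ∃ n : ℤ, 2 * q = n

/-- Membership in the paramodular group `G_Δ` for `Δ = diag(1,2)`:
`Mᵀ·J·M = J`, together with the integrality pattern: all entries in `ℤ`,
except that `M₁₄, M₂₁, M₂₃, M₂₄, M₃₄ ∈ 2ℤ` and `2·M₄₂ ∈ ℤ`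
(indices here are 0-based: `M 0 3, M 1 0, M 1 2, M 1 3, M 2 3, M 3 1`). -/
def IsParamodular (M : Matrix (Fin 4) (Fin 4) ℚ) : Prop :=
  Mᵀ * Jmat * M = Jmat ∧
  IsEvenEntry (M 0 3) ∧ IsEvenEntry (M 1 0) ∧ IsEvenEntry (M 1 2) ∧
  IsEvenEntry (M 1 3) ∧ IsEvenEntry (M 2 3) ∧ IsHalfIntEntry (M 3 1) ∧
  ∀ i j : Fin 4,
    (i, j) ∉ ({(0, 3), (1, 0), (1, 2), (1, 3), (2, 3), (3, 1)} :
      Set (Fin 4 × Fin 4)) → IsIntEntry (M i j)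

/-- The diagonal matrix `D = diag(1,1,1,2)` over `ℚ`. -/
def Dmat : Matrix (Fin 4) (Fin 4) ℚ :=
  !![1, 0, 0, 0; 0, 1, 0, 0; 0, 0, 1, 0; 0, 0, 0, 2]

/-- The conjugation `E(M) = D·M·D⁻¹`. -/
noncomputable def Emat (M : Matrix (Fin 4) (Fin 4) ℚ) : Matrix (Fin 4) (Fin 4) ℚ :=
  Dmat * M * Dmat⁻¹

/-- Reduction modulo 2 of a rational matrix with integer entries
(entrywise, via the numerator). -/
def red2 (M : Matrix (Fin 4) (Fin 4) ℚ) : Matrix (Fin 4) (Fin 4) (ZMod 2) :=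
  Matrix.of fun i j => ((M i j).num : ZMod 2)

/-!
Conjugation by `D` multiplies the last row by `2` and divides the last column by `2`, and the
integrality pattern of `G_Δ` makes the result integral. From `Mᵀ J M = J` we get
`det E(M) = det M = ±1`, so the integral matrix `E(M)` is invertible over `ℤ`; its integral inverse
is `E(M⁻¹)`, and the identities `E(M) E(M⁻¹) = E(M⁻¹) E(M) = 1` over `ℤ` reduce modulo `2`.
-/

section MatrixLemmas

variable {n R S K : Type*} [Fintype n] [DecidableEq n] [CommRing R] [CommRing S] [Field K]

theorem det_mul_self_eq_one_of_transpose_mul_mul_eq {J M : Matrix n n R} (hJ : IsUnit J.det)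
    (h : Mᵀ * J * M = J) : M.det * M.det = 1 := by
  refine hJ.mul_left_cancel ?_
  calc J.det * (M.det * M.det) = (Mᵀ * J * M).det := by rw [det_mul, det_mul, det_transpose]; ring
    _ = J.det * 1 := by rw [h, mul_one]

theorem isUnit_det_of_det_map_mul_self_eq_one {f : R →+* S} (hf : Function.Injective f)
    {A : Matrix n n R} (h : (A.map f).det * (A.map f).det = 1) : IsUnit A.det := by
  refine .of_mul_eq_one A.det (hf ?_)
  rw [map_mul, map_one, RingHom.map_det, RingHom.mapMatrix_apply, h]

theorem map_mul_map_nonsing_inv (f : R →+* S) {A : Matrix n n R} (hA : IsUnit A.det) :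
    A.map f * A⁻¹.map f = 1 := by
  rw [← Matrix.map_mul, mul_nonsing_inv A hA, Matrix.map_one f f.map_zero f.map_one]

theorem map_nonsing_inv (f : R →+* S) {A : Matrix n n R} (hA : IsUnit A.det) :
    A⁻¹.map f = (A.map f)⁻¹ :=
  (inv_eq_right_inv (map_mul_map_nonsing_inv f hA)).symm

theorem diagonal_mul_mul_diagonal_inv_apply {d : n → K} (hd : ∀ i, d i ≠ 0) (M : Matrix n n K)
    (i j : n) : (diagonal d * M * (diagonal d)⁻¹) i j = d i * M i j / d j := by
  have hinv : (diagonal d)⁻¹ = diagonal d⁻¹ :=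
    inv_eq_right_inv (by simp [diagonal_mul_diagonal, hd])
  rw [hinv, mul_diagonal, diagonal_mul, Pi.inv_apply, div_eq_mul_inv]

end MatrixLemmas

theorem IsIntEntry.two_mul {q : ℚ} : IsIntEntry q → IsIntEntry (2 * q)
  | ⟨n, hn⟩ => ⟨2 * n, by rw [hn]; push_cast; rfl⟩

theorem IsEvenEntry.isIntEntry {q : ℚ} : IsEvenEntry q → IsIntEntry q
  | ⟨n, hn⟩ => ⟨2 * n, by rw [hn]; push_cast; rfl⟩

theorem IsEvenEntry.isIntEntry_div_two {q : ℚ} : IsEvenEntry q → IsIntEntry (q / 2)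
  | ⟨n, hn⟩ => ⟨n, by rw [hn]; ring⟩

theorem exists_map_intCast_eq {m n : Type*} {M : Matrix m n ℚ} (hM : ∀ i j, IsIntEntry (M i j)) :
    ∃ A : Matrix m n ℤ, A.map (Int.castRingHom ℚ) = M := by
  choose A hA using hM
  exact ⟨of A, by ext i j; simp [hA]⟩

theorem red2_map_intCast (A : Matrix (Fin 4) (Fin 4) ℤ) :
    red2 (A.map (Int.castRingHom ℚ)) = A.map (Int.castRingHom (ZMod 2)) := by
  ext i j
  simp [red2]

theorem isUnit_det_Jmat : IsUnit Jmat.det := by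
  have hJ : Jmat * -Jmat = 1 := by
    ext i j
    fin_cases i <;> fin_cases j <;> simp [Jmat, Matrix.mul_apply, Fin.sum_univ_four]
  exact isUnit_det_of_right_inverse hJ

theorem Dmat_eq_diagonal : Dmat = diagonal fun i => if i = 3 then 2 else 1 := by
  ext i j
  fin_cases i <;> fin_cases j <;> simp [Dmat]

theorem isUnit_Dmat : IsUnit Dmat := by
  rw [Dmat_eq_diagonal, isUnit_diagonal, Pi.isUnit_iff]
  intro i
  split_ifs <;> simp

section Emat

variable (M N : Matrix (Fin 4) (Fin 4) ℚ)

theorem Emat_apply (i j : Fin 4) :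
    Emat M i j = (if i = 3 then 2 else 1) * M i j / (if j = 3 then 2 else 1) := by
  rw [Emat, Dmat_eq_diagonal, diagonal_mul_mul_diagonal_inv_apply]
  intro k
  split_ifs <;> norm_num

theorem Emat_mul : Emat (M * N) = Emat M * Emat N := by
  have hD : Dmat⁻¹ * Dmat = 1 := nonsing_inv_mul _ ((isUnit_iff_isUnit_det _).mp isUnit_Dmat)
  calc Dmat * (M * N) * Dmat⁻¹ = Dmat * M * 1 * N * Dmat⁻¹ := by noncomm_ring
    _ = Dmat * M * Dmat⁻¹ * (Dmat * N * Dmat⁻¹) := by rw [← hD]; noncomm_ring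

theorem Emat_inv : Emat M⁻¹ = (Emat M)⁻¹ := by
  have hD : Dmat⁻¹⁻¹ = Dmat := nonsing_inv_nonsing_inv _ ((isUnit_iff_isUnit_det _).mp isUnit_Dmat)
  rw [Emat, Emat, Matrix.mul_inv_rev, Matrix.mul_inv_rev, hD, Matrix.mul_assoc]

theorem det_Emat : (Emat M).det = M.det :=
  det_conj isUnit_Dmat M

end Emat

namespace IsParamodular

variable {M : Matrix (Fin 4) (Fin 4) ℚ}

theorem det_mul_self (hM : IsParamodular M) : M.det * M.det = 1 :=
  det_mul_self_eq_one_of_transpose_mul_mul_eq isUnit_det_Jmat hM.1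

theorem isIntEntry_apply (hM : IsParamodular M) {i j : Fin 4} (hij : (i, j) ≠ (3, 1)) :
    IsIntEntry (M i j) := by
  obtain ⟨-, h03, h10, h12, h13, h23, -, h_int⟩ := hM
  by_cases h : (i, j) ∈ ({(0, 3), (1, 0), (1, 2), (1, 3), (2, 3), (3, 1)} : Set (Fin 4 × Fin 4))
  · simp only [Set.mem_insert_iff, Set.mem_singleton_iff, hij, or_false, Prod.mk.injEq] at h
    obtain ⟨rfl, rfl⟩ | ⟨rfl, rfl⟩ | ⟨rfl, rfl⟩ | ⟨rfl, rfl⟩ | ⟨rfl, rfl⟩ := h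
    exacts [h03.isIntEntry, h10.isIntEntry, h12.isIntEntry, h13.isIntEntry, h23.isIntEntry]
  · exact h_int i j h

theorem isEvenEntry_apply_three (hM : IsParamodular M) {i : Fin 4} (hi : i ≠ 3) :
    IsEvenEntry (M i 3) := by
  obtain ⟨-, h03, -, -, h13, h23, -⟩ := hM
  fin_cases i
  exacts [h03, h13, h23, absurd rfl hi]

theorem isHalfIntEntry_three_apply (hM : IsParamodular M) (j : Fin 4) :
    IsHalfIntEntry (M 3 j) := by
  by_cases hj : j = 1
  · obtain ⟨-, -, -, -, -, -, h31, -⟩ := hM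
    exact hj ▸ h31
  · exact (hM.isIntEntry_apply (by simp [hj])).two_mul

theorem isIntEntry_Emat_apply (hM : IsParamodular M) (i j : Fin 4) :
    IsIntEntry (Emat M i j) := by
  rw [Emat_apply]
  by_cases hi : i = 3 <;> by_cases hj : j = 3
  · simpa [hi, hj] using hM.isIntEntry_apply (i := 3) (j := 3) (by simp)
  · simpa [hi, hj, IsHalfIntEntry, IsIntEntry] using hM.isHalfIntEntry_three_apply j
  · simpa [hi, hj] using (hM.isEvenEntry_apply_three hi).isIntEntry_div_two
  · simpa [hi, hj] using hM.isIntEntry_apply (j := j) (by simp [hi])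

theorem exists_isUnit_det_map_eq_Emat (hM : IsParamodular M) :
    ∃ A : Matrix (Fin 4) (Fin 4) ℤ, IsUnit A.det ∧ A.map (Int.castRingHom ℚ) = Emat M := by
  obtain ⟨A, hA⟩ := exists_map_intCast_eq hM.isIntEntry_Emat_apply
  have hdet : (A.map (Int.castRingHom ℚ)).det * (A.map (Int.castRingHom ℚ)).det = 1 := by
    rw [hA, det_Emat, hM.det_mul_self]
  exact ⟨A, isUnit_det_of_det_map_mul_self_eq_one Int.cast_injective hdet, hA⟩

theorem red2_Emat_mul_red2_Emat_inv (hM : IsParamodular M) :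
    red2 (Emat M) * red2 (Emat M⁻¹) = 1 := by
  obtain ⟨A, hA, hAM⟩ := hM.exists_isUnit_det_map_eq_Emat
  rw [Emat_inv, ← hAM, ← map_nonsing_inv _ hA, red2_map_intCast, red2_map_intCast,
    map_mul_map_nonsing_inv _ hA]

end IsParamodular

/-- For `M ∈ G_Δ`: `E(M) = D·M·D⁻¹` has integer entries, `E` is multiplicative on
`G_Δ`, and the reduction of `E(M)` mod 2 is invertible, with inverse the reduction
of `E(M⁻¹)`. -/
theorem Emat_integral_multiplicative_invertible :
    (∀ M : Matrix (Fin 4) (Fin 4) ℚ, IsParamodular M →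
      ∀ i j : Fin 4, IsIntEntry (Emat M i j)) ∧
    (∀ M N : Matrix (Fin 4) (Fin 4) ℚ, IsParamodular M → IsParamodular N →
      Emat (M * N) = Emat M * Emat N) ∧
    (∀ M : Matrix (Fin 4) (Fin 4) ℚ, IsParamodular M →
      red2 (Emat M) * red2 (Emat M⁻¹) = 1 ∧
      red2 (Emat M⁻¹) * red2 (Emat M) = 1) := by
  refine ⟨fun M hM => hM.isIntEntry_Emat_apply, fun M N _ _ => Emat_mul M N, fun M hM => ?_⟩
  have hinv := hM.red2_Emat_mul_red2_Emat_inv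
  exact ⟨hinv, mul_eq_one_comm.mp hinv⟩
end

section
/- For any two vectors v, w ∈ (ℤ/2ℤ)⁴ such that (v₂, v₄) ≠ (0,0) and (w₂, w₄) ≠ (0,0), there exists M ∈ G_Δ such that multiplying v by the reduction of E(M) modulo 2 yields w. (That is, the twelve 2-torsion classes outside im φ₂ form a single orbit under the monodromy action of the paramodular group.) -/
open Matrix

/-!
The conjugation `E` identifies `G_Δ` with the group of integral isometries of the alternating form
`Ω = 2·D⁻¹JD⁻¹` of type `(2, 1)`, whose radical modulo `2` is `{v₂ = v₄ = 0}`. Every integral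
symplectic transvection `x ↦ x + c·Ω(u, x)·u` is an isometry, and over a field the one with
`u = w - v` and `c = Ω(w, v)⁻¹` takes `v` to `w` whenever `Ω(w, v) ≠ 0`. Two vectors outside the
radical always have a common non-orthogonal vector `z`, so two transvections, `v ↦ z ↦ w`, suffice.
-/

theorem exists_dotProduct_ne_zero_and_dotProduct_ne_zero {n R : Type*} [Fintype n]
    [NonAssocSemiring R] {a b : n → R} (ha : a ≠ 0) (hb : b ≠ 0) :
    ∃ z, z ⬝ᵥ a ≠ 0 ∧ z ⬝ᵥ b ≠ 0 := by
  classical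
  obtain ⟨i, hi⟩ := Function.ne_iff.1 ha
  obtain ⟨j, hj⟩ := Function.ne_iff.1 hb
  by_cases hbi : b i = 0
  · by_cases haj : a j = 0
    · exact ⟨Pi.single i 1 + Pi.single j 1, by simpa [add_dotProduct, haj] using hi,
        by simpa [add_dotProduct, hbi] using hj⟩
    · exact ⟨Pi.single j 1, by simpa using haj, by simpa using hj⟩
  · exact ⟨Pi.single i 1, by simpa using hi, by simpa using hbi⟩

section Isometry

variable {n R K : Type*} [Fintype n] [DecidableEq n] [CommRing R] [Field K]

/-- The isometries of the bilinear form with Gram matrix `Ω`, as a submonoid of all matrices because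
invertibility is automatic only for nondegenerate `Ω`. -/
def isometrySubmonoid (Ω : Matrix n n R) : Submonoid (Matrix n n R) where
  carrier := {A | Aᵀ * Ω * A = Ω}
  one_mem' := by simp
  mul_mem' {A B} hA hB := calc
    (A * B)ᵀ * Ω * (A * B) = Bᵀ * (Aᵀ * Ω * A) * B := by
      simp only [transpose_mul, Matrix.mul_assoc]
    _ = Ω := by rw [hA, hB]

theorem mem_isometrySubmonoid {Ω A : Matrix n n R} :
    A ∈ isometrySubmonoid Ω ↔ Aᵀ * Ω * A = Ω :=
  Iff.rfl

theorem isUnit_det_of_mem_isometrySubmonoid [IsDomain R] {Ω A : Matrix n n R}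
    (hΩ : Ω.det ≠ 0) (hA : A ∈ isometrySubmonoid Ω) : IsUnit A.det := by
  have hdet : A.det * Ω.det * A.det = Ω.det := by
    simpa using congrArg det (mem_isometrySubmonoid.1 hA)
  exact IsUnit.of_mul_eq_one A.det (mul_right_cancel₀ hΩ (by linear_combination hdet))

theorem exists_mul_eq_mul_of_mem_isometrySubmonoid [IsDomain R] {Ω A : Matrix n n R}
    (hΩ : Ω.det ≠ 0) (hA : A ∈ isometrySubmonoid Ω) : ∃ B : Matrix n n R, Ω * A = B * Ω := by
  have hAt : IsUnit Aᵀ.det := by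
    simpa using isUnit_det_of_mem_isometrySubmonoid hΩ hA
  refine ⟨Aᵀ⁻¹, ?_⟩
  calc Ω * A = Aᵀ⁻¹ * (Aᵀ * (Ω * A)) := (nonsing_inv_mul_cancel_left _ _ hAt).symm
    _ = Aᵀ⁻¹ * Ω := by
      rw [← Matrix.mul_assoc Aᵀ, mem_isometrySubmonoid.1 hA]

/-- The matrix of `x ↦ x + c·Ω(u, x)·u`, the symplectic transvection along `u` of the form with
Gram matrix `Ω`. -/
def symplecticTransvection (Ω : Matrix n n R) (c : R) (u : n → R) : Matrix n n R :=
  1 + c • vecMulVec u (u ᵥ* Ω)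

theorem symplecticTransvection_mulVec (Ω : Matrix n n R) (c : R) (u x : n → R) :
    symplecticTransvection Ω c u *ᵥ x = x + (c * (u ⬝ᵥ Ω *ᵥ x)) • u := by
  simp [symplecticTransvection, add_mulVec, smul_mulVec, vecMulVec_mulVec, dotProduct_mulVec,
    mul_smul]

theorem symplecticTransvection_map {S : Type*} [CommRing S] (f : R →+* S) (Ω : Matrix n n R)
    (c : R) (u : n → R) :
    (symplecticTransvection Ω c u).map f = symplecticTransvection (Ω.map f) (f c) (f ∘ u) := by
  ext i j
  simp [symplecticTransvection, vecMulVec_apply, RingHom.map_vecMul, one_apply, apply_ite f]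

theorem transpose_eq_neg_of_isAlt {Ω : Matrix n n R} (hΩ : (toBilin' Ω).IsAlt) : Ωᵀ = -Ω := by
  ext i j
  simpa using (hΩ.neg_eq (Pi.single i 1) (Pi.single j 1)).symm

theorem isAlt_toBilin'_map {S : Type*} [CommRing S] {f : R →+* S} (hf : Function.Surjective f)
    {Ω : Matrix n n R} (hΩ : (toBilin' Ω).IsAlt) : (toBilin' (Ω.map f)).IsAlt := by
  intro x
  obtain ⟨y, rfl⟩ := hf.comp_left x
  have hy := congrArg f (hΩ.self_eq_zero y)
  simpa [toBilin'_apply] using hy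

theorem symplecticTransvection_mem_isometrySubmonoid {Ω : Matrix n n R}
    (hΩ : (toBilin' Ω).IsAlt) (c : R) (u : n → R) :
    symplecticTransvection Ω c u ∈ isometrySubmonoid Ω := by
  have hskew : Ω *ᵥ u = -(u ᵥ* Ω) := by
    rw [← vecMul_transpose, transpose_eq_neg_of_isAlt hΩ, vecMul_neg]
  have hself : u ᵥ* Ω ⬝ᵥ u = 0 := by
    simpa [toBilin'_apply', dotProduct_mulVec] using hΩ.self_eq_zero u
  rw [mem_isometrySubmonoid]
  simp [symplecticTransvection, Matrix.add_mul, Matrix.mul_add, vecMulVec_mul, mul_vecMulVec,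
    transpose_vecMulVec, add_mulVec, smul_mulVec, vecMulVec_mulVec, hskew, hself]

theorem exists_mem_isometrySubmonoid_map_mulVec_eq_of_dotProduct_ne_zero {f : R →+* K}
    (hf : Function.Surjective f) {Ω : Matrix n n R} (hΩ : (toBilin' Ω).IsAlt) {v w : n → K}
    (hvw : w ⬝ᵥ Ω.map f *ᵥ v ≠ 0) : ∃ A ∈ isometrySubmonoid Ω, A.map f *ᵥ v = w := by
  obtain ⟨u, hu : f ∘ u = w - v⟩ := hf.comp_left (w - v)
  obtain ⟨c, hc⟩ := hf (w ⬝ᵥ Ω.map f *ᵥ v)⁻¹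
  refine ⟨_, symplecticTransvection_mem_isometrySubmonoid hΩ c u, ?_⟩
  have hself : v ⬝ᵥ Ω.map f *ᵥ v = 0 := by
    simpa [toBilin'_apply'] using (isAlt_toBilin'_map hf hΩ).self_eq_zero v
  rw [symplecticTransvection_map, symplecticTransvection_mulVec, hu, hc, sub_dotProduct, hself,
    sub_zero, inv_mul_cancel₀ hvw, one_smul, add_sub_cancel]

theorem exists_mem_isometrySubmonoid_map_mulVec_eq {f : R →+* K} (hf : Function.Surjective f)
    {Ω : Matrix n n R} (hΩ : (toBilin' Ω).IsAlt) {v w : n → K}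
    (hv : Ω.map f *ᵥ v ≠ 0) (hw : Ω.map f *ᵥ w ≠ 0) :
    ∃ A ∈ isometrySubmonoid Ω, A.map f *ᵥ v = w := by
  obtain ⟨z, hzv, hzw⟩ := exists_dotProduct_ne_zero_and_dotProduct_ne_zero hv hw
  have hwz : w ⬝ᵥ Ω.map f *ᵥ z ≠ 0 := by
    simpa only [toBilin'_apply'] using
      (isAlt_toBilin'_map hf hΩ).eq_iff.not.1 (by rwa [toBilin'_apply'])
  obtain ⟨A, hA, rfl⟩ := exists_mem_isometrySubmonoid_map_mulVec_eq_of_dotProduct_ne_zero hf hΩ hzv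
  obtain ⟨B, hB, rfl⟩ := exists_mem_isometrySubmonoid_map_mulVec_eq_of_dotProduct_ne_zero hf hΩ hwz
  exact ⟨B * A, mul_mem hB hA, by rw [Matrix.map_mul, mulVec_mulVec]⟩

end Isometry

/-- The Gram matrix `2·D⁻¹JD⁻¹` of the alternating form of type `(2, 1)` on `ℤ⁴` that is preserved
by `E(M) = DMD⁻¹` for `M ∈ G_Δ`; the factor `2` makes it integral. -/
def polarizationMatrix : Matrix (Fin 4) (Fin 4) ℤ :=
  !![0, 0, 2, 0; 0, 0, 0, 1; -2, 0, 0, 0; 0, -1, 0, 0]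

theorem isAlt_polarizationMatrix : (toBilin' polarizationMatrix).IsAlt := by
  intro x
  have hform : toBilin' polarizationMatrix x x =
      x 0 * 2 * x 2 + x 1 * x 3 - x 2 * 2 * x 0 - x 3 * x 1 := by
    simp [toBilin'_apply, polarizationMatrix, Fin.sum_univ_four, sub_eq_add_neg, add_assoc]
  rw [hform]
  ring

theorem det_polarizationMatrix : polarizationMatrix.det = 4 := by
  decide

theorem polarizationMatrix_mod_two_mulVec_ne_zero {v : Fin 4 → ZMod 2}
    (hv : ¬(v 1 = 0 ∧ v 3 = 0)) :
    polarizationMatrix.map (Int.castRingHom (ZMod 2)) *ᵥ v ≠ 0 := by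
  intro h
  refine hv ⟨?_, ?_⟩
  · simpa [polarizationMatrix, mulVec, dotProduct, Fin.sum_univ_four] using congrFun h 3
  · simpa [polarizationMatrix, mulVec, dotProduct, Fin.sum_univ_four] using congrFun h 1

/- The columns `0` and `2` of `Ω`, hence of `ΩA = BΩ`, are even, and the rows `1` and `3` of `ΩA`
are those of `A` up to order and sign. -/
theorem two_dvd_of_mem_isometrySubmonoid_polarizationMatrix {A : Matrix (Fin 4) (Fin 4) ℤ}
    (hA : A ∈ isometrySubmonoid polarizationMatrix) :
    (2 ∣ A 1 0 ∧ 2 ∣ A 1 2) ∧ (2 ∣ A 3 0 ∧ 2 ∣ A 3 2) := by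
  obtain ⟨B, hB⟩ := exists_mul_eq_mul_of_mem_isometrySubmonoid
    (by rw [det_polarizationMatrix]; decide) hA
  have h10 : A 1 0 = 2 * B 3 2 := by
    simpa [polarizationMatrix, mul_apply, Fin.sum_univ_four, mul_comm] using congrFun₂ hB 3 0
  have h12 : A 1 2 = 2 * -B 3 0 := by
    simpa [polarizationMatrix, mul_apply, Fin.sum_univ_four, mul_comm, neg_eq_iff_eq_neg]
      using congrFun₂ hB 3 2
  have h30 : A 3 0 = 2 * -B 1 2 := by
    simpa [polarizationMatrix, mul_apply, Fin.sum_univ_four, mul_comm] using congrFun₂ hB 1 0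
  have h32 : A 3 2 = 2 * B 1 0 := by
    simpa [polarizationMatrix, mul_apply, Fin.sum_univ_four, mul_comm] using congrFun₂ hB 1 2
  exact ⟨⟨⟨_, h10⟩, ⟨_, h12⟩⟩, ⟨_, h30⟩, ⟨_, h32⟩⟩

theorem Dmat_eq_diagonal_s7 : Dmat = diagonal ![1, 1, 1, 2] := by
  ext i j
  fin_cases i <;> fin_cases j <;> rfl

theorem Dmat_inv_eq_diagonal : Dmat⁻¹ = diagonal ![1, 1, 1, 2⁻¹] := by
  refine inv_eq_left_inv ?_
  rw [Dmat_eq_diagonal_s7, diagonal_mul_diagonal, ← diagonal_one]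
  congr 1
  ext i
  fin_cases i <;> simp

theorem isUnit_det_Dmat : IsUnit Dmat.det := by
  simp [Dmat_eq_diagonal_s7, Fin.prod_univ_four]

theorem Emat_Dmat_inv_mul_mul_Dmat (N : Matrix (Fin 4) (Fin 4) ℚ) :
    Emat (Dmat⁻¹ * N * Dmat) = N := by
  rw [Emat, Matrix.mul_assoc Dmat⁻¹, mul_nonsing_inv_cancel_left _ _ isUnit_det_Dmat,
    mul_nonsing_inv_cancel_right _ _ isUnit_det_Dmat]

theorem Dmat_inv_mul_Jmat_mul_Dmat_inv :
    Dmat⁻¹ * Jmat * Dmat⁻¹ = (2⁻¹ : ℚ) • polarizationMatrix.map (Int.castRingHom ℚ) := by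
  rw [Dmat_inv_eq_diagonal]
  ext i j
  fin_cases i <;> fin_cases j <;> simp [Jmat, polarizationMatrix]

theorem Dmat_inv_mul_mul_Dmat_mem_isometrySubmonoid_Jmat {A : Matrix (Fin 4) (Fin 4) ℤ}
    (hA : A ∈ isometrySubmonoid polarizationMatrix) :
    Dmat⁻¹ * A.map (Int.castRingHom ℚ) * Dmat ∈ isometrySubmonoid Jmat := by
  set N := A.map (Int.castRingHom ℚ)
  have hN : Nᵀ * (Dmat⁻¹ * Jmat * Dmat⁻¹) * N = Dmat⁻¹ * Jmat * Dmat⁻¹ := by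
    have hmap := congrArg (Matrix.map · (Int.castRingHom ℚ)) (mem_isometrySubmonoid.1 hA)
    simp only [Matrix.map_mul, transpose_map] at hmap
    rw [Dmat_inv_mul_Jmat_mul_Dmat_inv, Matrix.mul_smul, Matrix.smul_mul, hmap]
  have hDt : Dmatᵀ = Dmat := by rw [Dmat_eq_diagonal_s7, diagonal_transpose]
  rw [mem_isometrySubmonoid]
  calc (Dmat⁻¹ * N * Dmat)ᵀ * Jmat * (Dmat⁻¹ * N * Dmat)
      = Dmat * (Nᵀ * (Dmat⁻¹ * Jmat * Dmat⁻¹) * N) * Dmat := by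
        simp only [transpose_mul, transpose_nonsing_inv, hDt, Matrix.mul_assoc]
    _ = Dmat * Dmat⁻¹ * Jmat * (Dmat⁻¹ * Dmat) := by
        rw [hN]; simp only [Matrix.mul_assoc]
    _ = Jmat := by
        rw [mul_nonsing_inv _ isUnit_det_Dmat, nonsing_inv_mul _ isUnit_det_Dmat,
          Matrix.one_mul, Matrix.mul_one]

theorem Dmat_inv_mul_mul_Dmat_apply (N : Matrix (Fin 4) (Fin 4) ℚ) (i j : Fin 4) :
    (Dmat⁻¹ * N * Dmat) i j = ![1, 1, 1, 2⁻¹] i * N i j * ![1, 1, 1, 2] j := by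
  rw [Dmat_inv_eq_diagonal, Dmat_eq_diagonal_s7, mul_diagonal, diagonal_mul]

theorem isParamodular_Dmat_inv_mul_mul_Dmat {A : Matrix (Fin 4) (Fin 4) ℤ}
    (hA : A ∈ isometrySubmonoid polarizationMatrix) :
    IsParamodular (Dmat⁻¹ * A.map (Int.castRingHom ℚ) * Dmat) := by
  obtain ⟨⟨⟨a, ha⟩, b, hb⟩, ⟨c, hc⟩, d, hd⟩ :=
    two_dvd_of_mem_isometrySubmonoid_polarizationMatrix hA
  refine ⟨Dmat_inv_mul_mul_Dmat_mem_isometrySubmonoid_Jmat hA, ⟨A 0 3, ?_⟩, ⟨a, ?_⟩, ⟨b, ?_⟩,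
    ⟨A 1 3, ?_⟩, ⟨A 2 3, ?_⟩, ⟨A 3 1, ?_⟩, fun i j hij ↦ ?_⟩ <;>
    rw [Dmat_inv_mul_mul_Dmat_apply]
  · simp [mul_comm]
  · simp [ha]
  · simp [hb]
  · simp [mul_comm]
  · simp [mul_comm]
  · simp
  · obtain rfl | hi := eq_or_ne i 3
    · fin_cases j
      · exact ⟨c, by simp [hc]⟩
      · simp at hij
      · exact ⟨d, by simp [hd]⟩
      · exact ⟨A 3 3, by simp [mul_comm]⟩
    · have hj : j ≠ 3 := by
        rintro rfl
        fin_cases i <;> simp at hi hij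
      exact ⟨A i j, by fin_cases i <;> fin_cases j <;> simp at hi hj ⊢⟩

/-- The twelve 2-torsion classes outside `im φ₂` (vectors with `(v₂, v₄) ≠ (0,0)`)
form a single orbit under the monodromy action of `G_Δ`. -/
theorem orbit_outside_im_phi2 (v w : Fin 4 → ZMod 2)
    (hv : ¬(v 1 = 0 ∧ v 3 = 0)) (hw : ¬(w 1 = 0 ∧ w 3 = 0)) :
    ∃ M : Matrix (Fin 4) (Fin 4) ℚ,
      IsParamodular M ∧ (red2 (Emat M)).mulVec v = w := by
  obtain ⟨A, hA, hAv⟩ := exists_mem_isometrySubmonoid_map_mulVec_eq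
    (ZMod.ringHom_surjective (Int.castRingHom (ZMod 2))) isAlt_polarizationMatrix
    (polarizationMatrix_mod_two_mulVec_ne_zero hv) (polarizationMatrix_mod_two_mulVec_ne_zero hw)
  refine ⟨Dmat⁻¹ * A.map (Int.castRingHom ℚ) * Dmat, isParamodular_Dmat_inv_mul_mul_Dmat hA, ?_⟩
  rw [Emat_Dmat_inv_mul_mul_Dmat, red2_map_intCast, hAv]
end

section
/- The subgroup of GL₄(ℤ/2ℤ) generated by the mod-2 reductions E(M) of the matrices M_b (for all parities of b₁₁, b₁₂, b₂₂), M_d (for all admissible d with d₁₁d₂₂ − 2d₁₂d₂₁ = 1), and M_{1,2} acts transitively on the set of twelve vectors v ∈ (ℤ/2ℤ)⁴ with (v₂, v₄) ≠ (0,0): concretely, the group generated by the three linear maps v ↦ (v₁+v₃, v₂, v₃, v₄), v ↦ (v₁+v₄, v₂, v₃, v₄), v ↦ (v₁, v₂+v₄, v₃, v₄), v ↦ (v₁+v₂, v₂, v₃, v₄), v ↦ (v₁, v₂, v₃+v₄, v₄), v ↦ (v₃, v₄, v₁, v₂) of (ℤ/2ℤ)⁴ acts transitively on this twelve-element set. 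-/
/-- The linear involution `v ↦ (v₁+v₃, v₂, v₃, v₄)` of `(ℤ/2ℤ)⁴`
(the mod-2 reduction of `E(M_b)` with `b₁₁` odd, `b₁₂, b₂₂` even). -/
def e1 : Equiv.Perm (Fin 4 → ZMod 2) :=
  Function.Involutive.toPerm (fun v => ![v 0 + v 2, v 1, v 2, v 3]) (by intro v; revert v; decide)

/-- The linear involution `v ↦ (v₁+v₄, v₂, v₃, v₄)` of `(ℤ/2ℤ)⁴`
(the mod-2 reduction of `E(M_b)` with `b₁₂` odd, `b₁₁, b₂₂` even). -/
def e2 : Equiv.Perm (Fin 4 → ZMod 2) :=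
  Function.Involutive.toPerm (fun v => ![v 0 + v 3, v 1, v 2, v 3]) (by intro v; revert v; decide)

/-- The linear involution `v ↦ (v₁, v₂+v₄, v₃, v₄)` of `(ℤ/2ℤ)⁴`
(the mod-2 reduction of `E(M_b)` with `b₂₂` odd, `b₁₁, b₁₂` even). -/
def e3 : Equiv.Perm (Fin 4 → ZMod 2) :=
  Function.Involutive.toPerm (fun v => ![v 0, v 1 + v 3, v 2, v 3]) (by intro v; revert v; decide)

/-- The linear involution `v ↦ (v₁+v₂, v₂, v₃, v₄)` of `(ℤ/2ℤ)⁴`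
(the mod-2 reduction of `E(M_d)` with `d₂₁` odd, `d₁₂` even). -/
def e4 : Equiv.Perm (Fin 4 → ZMod 2) :=
  Function.Involutive.toPerm (fun v => ![v 0 + v 1, v 1, v 2, v 3]) (by intro v; revert v; decide)

/-- The linear involution `v ↦ (v₁, v₂, v₃+v₄, v₄)` of `(ℤ/2ℤ)⁴`
(the mod-2 reduction of `E(M_d)` with `d₁₂` odd, `d₂₁` even). -/
def e5 : Equiv.Perm (Fin 4 → ZMod 2) :=
  Function.Involutive.toPerm (fun v => ![v 0, v 1, v 2 + v 3, v 3]) (by intro v; revert v; decide)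

/-- The linear involution `v ↦ (v₃, v₄, v₁, v₂)` of `(ℤ/2ℤ)⁴`
(the mod-2 reduction of `E(M_{1,2})`). -/
def e6 : Equiv.Perm (Fin 4 → ZMod 2) :=
  Function.Involutive.toPerm (fun v => ![v 2, v 3, v 0, v 1]) (by intro v; revert v; decide)

/-!
The maps `e2`, `e3`, `e5` add the last coordinate to the first, second and third respectively. Once
the last coordinate is nonzero, hence a unit, their powers move the other coordinates arbitrarily
without changing the last one. If the last coordinate vanishes then the second does not, and `e6`
swaps the two.
-/

open MulAction Function

/-- The permutation `σ` of `ι → R` is the elementary transvection that adds coordinate `j` to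
coordinate `i`. This is the common shape of the generators `e1`, …, `e5`; a predicate on
permutations is used because those generators are not given as matrices. -/
def IsCoordTransvection {ι R : Type*} [DecidableEq ι] [Add R]
    (σ : Equiv.Perm (ι → R)) (i j : ι) : Prop :=
  ∀ v, σ v = update v i (v i + v j)

section Transvection

variable {ι : Type*} [DecidableEq ι] {i j : ι}

theorem IsCoordTransvection.pow_apply {R : Type*} [AddMonoid R] {σ : Equiv.Perm (ι → R)}
    (hσ : IsCoordTransvection σ i j) (hij : i ≠ j) (k : ℕ) (v : ι → R) :
    (σ ^ k) v = update v i (v i + k • v j) := by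
  induction k with
  | zero => simp
  | succ k ih =>
    rw [pow_succ', Equiv.Perm.mul_apply, ih, hσ, update_self, update_of_ne hij.symm, update_idem,
      succ_nsmul, add_assoc]

variable {n : ℕ} [NeZero n] {G : Subgroup (Equiv.Perm (ι → ZMod n))} {v w : ι → ZMod n}

theorem IsCoordTransvection.update_mem_orbit {σ : Equiv.Perm (ι → ZMod n)}
    (hσ : IsCoordTransvection σ i j) (hij : i ≠ j) (hσG : σ ∈ G) (hv : IsUnit (v j))
    (c : ZMod n) : update v i c ∈ orbit G v := by
  obtain ⟨u, hu⟩ := hv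
  obtain ⟨k, hk⟩ : ∃ k : ℕ, (k : ZMod n) = (c - v i) * ↑u⁻¹ := ZMod.natCast_zmod_surjective _
  have hc : v i + k • v j = c := by
    rw [nsmul_eq_mul, hk, ← hu, Units.inv_mul_cancel_right, add_sub_cancel]
  have hσk : (σ ^ k) v = update v i c := by rw [hσ.pow_apply hij, hc]
  exact ⟨⟨σ ^ k, pow_mem hσG k⟩, hσk⟩

theorem mem_orbit_of_forall_exists_isCoordTransvection [Finite ι]
    (hG : ∀ i ≠ j, ∃ σ ∈ G, IsCoordTransvection σ i j) (hv : IsUnit (v j)) (hvw : w j = v j) :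
    w ∈ orbit G v := by
  cases nonempty_fintype ι
  suffices h : ∀ s : Finset ι, s.piecewise w v ∈ orbit G v by
    simpa only [Finset.piecewise_univ] using h Finset.univ
  intro s
  induction s using Finset.induction_on with
  | empty => simp only [Finset.piecewise_empty, mem_orbit_self]
  | insert i s _ ih =>
    have hj : s.piecewise w v j = v j := by
      rw [Finset.piecewise, hvw, ite_self]
    rw [Finset.piecewise_insert]
    obtain rfl | hij := eq_or_ne i j
    · rwa [hvw, ← hj, update_eq_self]
    · obtain ⟨σ, hσG, hσ⟩ := hG i hij
      rw [← orbit_eq_iff.mpr ih]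
      exact hσ.update_mem_orbit hij hσG (hj ▸ hv) (w i)

end Transvection

theorem isCoordTransvection_e2 : IsCoordTransvection e2 0 3 := by
  intro v; ext k; fin_cases k <;> rfl

theorem isCoordTransvection_e3 : IsCoordTransvection e3 1 3 := by
  intro v; ext k; fin_cases k <;> rfl

theorem isCoordTransvection_e5 : IsCoordTransvection e5 2 3 := by
  intro v; ext k; fin_cases k <;> rfl

section Generators

variable {G : Subgroup (Equiv.Perm (Fin 4 → ZMod 2))} {v w : Fin 4 → ZMod 2}

theorem mem_orbit_of_apply_three_ne_zero (he2 : e2 ∈ G) (he3 : e3 ∈ G) (he5 : e5 ∈ G)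
    (hv : v 3 ≠ 0) (hw : w 3 ≠ 0) : w ∈ orbit G v := by
  have hG : ∀ i ≠ (3 : Fin 4), ∃ σ ∈ G, IsCoordTransvection σ i 3 := by
    intro i hi
    fin_cases i
    · exact ⟨e2, he2, isCoordTransvection_e2⟩
    · exact ⟨e3, he3, isCoordTransvection_e3⟩
    · exact ⟨e5, he5, isCoordTransvection_e5⟩
    · exact absurd rfl hi
  have hvw : w 3 = v 3 := (Fin.eq_one_of_ne_zero _ hw).trans (Fin.eq_one_of_ne_zero _ hv).symm
  exact mem_orbit_of_forall_exists_isCoordTransvection hG hv.isUnit hvw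

theorem exists_mem_orbit_apply_three_ne_zero (he6 : e6 ∈ G) (hv : ¬(v 1 = 0 ∧ v 3 = 0)) :
    ∃ u ∈ orbit G v, u 3 ≠ 0 := by
  by_cases hv3 : v 3 = 0
  · have he6v : e6 v 3 = v 1 := rfl
    exact ⟨e6 v, ⟨⟨e6, he6⟩, rfl⟩, he6v ▸ fun hv1 => hv ⟨hv1, hv3⟩⟩
  · exact ⟨v, mem_orbit_self v, hv3⟩

end Generators

theorem generated_group_transitive_outside_im_phi2_general
    {G : Subgroup (Equiv.Perm (Fin 4 → ZMod 2))}
    (he2 : e2 ∈ G) (he3 : e3 ∈ G) (he5 : e5 ∈ G) (he6 : e6 ∈ G) {v w : Fin 4 → ZMod 2}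
    (hv : ¬(v 1 = 0 ∧ v 3 = 0)) (hw : ¬(w 1 = 0 ∧ w 3 = 0)) :
    ∃ τ ∈ G, τ v = w := by
  obtain ⟨x, hx, hx3⟩ := exists_mem_orbit_apply_three_ne_zero he6 hv
  obtain ⟨y, hy, hy3⟩ := exists_mem_orbit_apply_three_ne_zero he6 hw
  have hxy : y ∈ orbit G x := mem_orbit_of_apply_three_ne_zero he2 he3 he5 hx3 hy3
  have hvw : w ∈ orbit G v := by
    rw [← orbit_eq_iff.mpr hx, ← orbit_eq_iff.mpr hxy, orbit_eq_iff.mpr hy]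
    exact mem_orbit_self w
  obtain ⟨⟨τ, hτ⟩, hτv⟩ := hvw
  exact ⟨τ, hτ, hτv⟩

/-- The group generated by the six linear maps acts transitively on the
twelve-element set `{v ∈ (ℤ/2ℤ)⁴ : (v₂, v₄) ≠ (0,0)}` (0-based: indices 1 and 3). -/
theorem generated_group_transitive_outside_im_phi2
    (v w : Fin 4 → ZMod 2)
    (hv : ¬(v 1 = 0 ∧ v 3 = 0)) (hw : ¬(w 1 = 0 ∧ w 3 = 0)) :
    ∃ τ ∈ Subgroup.closure
      ({e1, e2, e3, e4, e5, e6} : Set (Equiv.Perm (Fin 4 → ZMod 2))),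
      τ v = w := by
  refine generated_group_transitive_outside_im_phi2_general ?_ ?_ ?_ ?_ hv hw <;>
    exact Subgroup.subset_closure (by simp)
end
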